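/- arXiv:2412.09525 — 4 statements merged into one kernel-verified Lean document; each statement's English description precedes it below -/
import Mathlib

section
/- Let r be an odd prime, let a be an integer, and let f be a positive integer divisible by r. If a^f ≡ 1 (mod r), then a^f ≡ 1 (mod r²). -/
/-!
Write `f = r * m`. Modulo `r` the Frobenius map `x ↦ x ^ r` is additive and injective, so
`a ^ f = (a ^ m) ^ r ≡ 1` already forces `a ^ m ≡ 1 (mod r)`; raising a congruence modulo `r` to
the `r`-th power lifts it to a congruence modulo `r ^ 2`. A squarefree modulus is handled one prime
factor at a time.
-/

section CommRing

variable {R : Type*} [CommRing R]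

theorem natCast_dvd_sub_of_dvd_pow_sub_pow {p : ℕ} (hp : p.Prime) (hrad : IsRadical (p : R))
    {a b : R} {k : ℕ} (h : (p : R) ∣ a ^ p ^ k - b ^ p ^ k) : (p : R) ∣ a - b := by
  obtain ⟨c, hc⟩ := exists_add_pow_prime_pow_eq hp (a - b) b k
  rw [sub_add_cancel] at hc
  have frobenius_sub : (a - b) ^ p ^ k = (a ^ p ^ k - b ^ p ^ k) - p * ((a - b) * b * c) := by
    linear_combination -hc
  exact hrad (p ^ k) (a - b) (frobenius_sub ▸ h.sub (dvd_mul_right _ _))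

theorem natCast_pow_succ_dvd_pow_sub_pow {p : ℕ} (hp : p.Prime) (hrad : IsRadical (p : R))
    {a b : R} {f k : ℕ} (hf : p ^ k ∣ f) (h : (p : R) ∣ a ^ f - b ^ f) :
    (p : R) ^ (k + 1) ∣ a ^ f - b ^ f := by
  obtain ⟨m, rfl⟩ := hf
  simp only [mul_comm (p ^ k) m, pow_mul] at h ⊢
  exact dvd_sub_pow_of_dvd_sub (natCast_dvd_sub_of_dvd_pow_sub_pow hp hrad h) k

theorem natCast_pow_dvd_of_squarefree {n k : ℕ} (hn : Squarefree n) {z : R}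
    (h : ∀ p : ℕ, p.Prime → p ∣ n → (p : R) ^ k ∣ z) : (n : R) ^ k ∣ z := by
  rw [← Nat.prod_primeFactors_of_squarefree hn, Nat.cast_prod, ← Finset.prod_pow]
  refine Finset.prod_dvd_of_coprime (fun p hp q hq hpq ↦ ?_) fun p hp ↦
    h p (Nat.prime_of_mem_primeFactors hp) (Nat.dvd_of_mem_primeFactors hp)
  have coprime_pq : p.Coprime q := (Nat.coprime_primes (Nat.prime_of_mem_primeFactors hp)
    (Nat.prime_of_mem_primeFactors hq)).mpr hpq
  exact coprime_pq.cast.pow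

end CommRing

theorem pow_modEq_one_sq_general {n : ℕ} (hn : Squarefree n) {a b : ℤ} {f : ℕ} (hnf : n ∣ f)
    (h : a ^ f ≡ b ^ f [ZMOD n]) : a ^ f ≡ b ^ f [ZMOD (n : ℤ) ^ 2] := by
  refine (Int.modEq_of_dvd (natCast_pow_dvd_of_squarefree hn fun p hp hpn ↦ ?_)).symm
  have hrad : IsRadical (p : ℤ) := (Nat.prime_iff_prime_int.mp hp).isRadical
  have hpf : p ^ 1 ∣ f := by simpa only [pow_one] using hpn.trans hnf
  have hdvd : (p : ℤ) ∣ a ^ f - b ^ f := (Int.natCast_dvd_natCast.mpr hpn).trans h.symm.dvd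
  exact natCast_pow_succ_dvd_pow_sub_pow hp hrad hpf hdvd

/-- Let `r` be an odd prime, `a` an integer and `f` a positive integer divisible by `r`.
If `a ^ f ≡ 1 (mod r)`, then `a ^ f ≡ 1 (mod r²)`. -/
theorem pow_modEq_one_sq {r : ℕ} (hr : r.Prime) (hodd : Odd r)
    (a : ℤ) (f : ℕ) (hf : 0 < f) (hrf : r ∣ f)
    (h : a ^ f ≡ 1 [ZMOD (r : ℤ)]) :
    a ^ f ≡ 1 [ZMOD ((r : ℤ) ^ 2)] := by
  rw [← one_pow f] at h ⊢
  exact pow_modEq_one_sq_general hr.prime.squarefree hrf h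
end

section
/- Let r be an odd prime, let a be an integer, and let f be a positive integer divisible by r. If a^f ≡ −1 (mod r), then a^f ≡ −1 (mod r²). -/
theorem pow_prime_pow_modEq_self {p : ℕ} (hp : p.Prime) (n : ℤ) (k : ℕ) :
    n ^ p ^ k ≡ n [ZMOD p] := by
  have : Fact p.Prime := ⟨hp⟩
  rw [← ZMod.intCast_eq_intCast_iff, Int.cast_pow, ZMod.pow_card_pow]

theorem modEq_of_pow_prime_pow_modEq {p : ℕ} (hp : p.Prime) {x y : ℤ} {k : ℕ}
    (h : x ^ p ^ k ≡ y ^ p ^ k [ZMOD p]) : x ≡ y [ZMOD p] :=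
  (pow_prime_pow_modEq_self hp x k).symm.trans (h.trans (pow_prime_pow_modEq_self hp y k))

theorem pow_pow_modEq_pow_succ_of_modEq {n : ℕ} {x y : ℤ} (h : x ≡ y [ZMOD n]) (k : ℕ) :
    x ^ n ^ k ≡ y ^ n ^ k [ZMOD (n : ℤ) ^ (k + 1)] :=
  Int.modEq_iff_dvd.mpr (dvd_sub_pow_of_dvd_sub h.dvd k)

theorem pow_prime_pow_modEq_pow_succ {p : ℕ} (hp : p.Prime) {x y : ℤ} {k : ℕ}
    (h : x ^ p ^ k ≡ y ^ p ^ k [ZMOD p]) :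
    x ^ p ^ k ≡ y ^ p ^ k [ZMOD (p : ℤ) ^ (k + 1)] :=
  pow_pow_modEq_pow_succ_of_modEq (modEq_of_pow_prime_pow_modEq hp h) k

/-- Let `r` be an odd prime, `a` an integer and `f` a positive integer divisible by `r`.
If `a ^ f ≡ −1 (mod r)`, then `a ^ f ≡ −1 (mod r²)`. -/
theorem pow_modEq_neg_one_sq {r : ℕ} (hr : r.Prime) (hodd : Odd r)
    (a : ℤ) (f : ℕ) (hf : 0 < f) (hrf : r ∣ f)
    (h : a ^ f ≡ -1 [ZMOD (r : ℤ)]) :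
    a ^ f ≡ -1 [ZMOD ((r : ℤ) ^ 2)] := by
  obtain ⟨m, rfl⟩ := hrf
  have pow_eq : a ^ (r * m) = (a ^ m) ^ r ^ 1 := by rw [pow_one, pow_mul']
  have neg_one_eq : (-1 : ℤ) = (-1) ^ r ^ 1 := by rw [pow_one, hodd.neg_one_pow]
  rw [pow_eq, neg_one_eq] at h ⊢
  exact pow_prime_pow_modEq_pow_succ hr h
end

section
/- Let G be a finite group whose Sylow 2-subgroups are Klein four groups, i.e. have order 4 and exponent 2. Let P be a Sylow 2-subgroup of G and suppose there are two nontrivial elements of P that are not conjugate in G. Then G has a normal 2-complement: a normal subgroup N of G of index 4 whose order is odd. -/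
/-!
The automorphisms that `N_G(P)` induces on an abelian Sylow `2`-subgroup `P` form a group of odd
order. When `|P| = 4`, the orbit of a nontrivial `z ∈ P` misses `1` and one of two non-conjugate
elements, so it has at most two points, hence, being of odd size, only one. Thus
`N_G(P) ≤ C_G(P)`, and Burnside's transfer theorem gives the complement.
-/

section OddAction

variable {A : Type*} [Group A]

theorem smul_eq_self_of_ncard_orbit_le_two {α : Type*} [MulAction A α] (hA : Odd (Nat.card A))
    {z : α} (hz : (MulAction.orbit A z).ncard ≤ 2) (a : A) : a • z = z := by
  have hodd : Odd (MulAction.orbit A z).ncard := by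
    rw [← MulAction.index_stabilizer]
    exact hA.of_dvd_nat (Subgroup.index_dvd_card _)
  have hone : (MulAction.orbit A z).ncard = 1 := by grind
  exact Set.ncard_le_one_iff (Set.finite_of_ncard_pos hodd.pos) |>.1 hone.le
    (MulAction.mem_orbit z a) (MulAction.mem_orbit_self z)

theorem smul_eq_self_of_card_eq_four_of_notMem_orbit {K : Type*} [Group K] [MulDistribMulAction A K]
    (hA : Odd (Nat.card A)) (hK : Nat.card K = 4) {x y : K} (hx : x ≠ 1) (hy : y ≠ 1)
    (hxy : x ∉ MulAction.orbit A y) (a : A) (z : K) : a • z = z := by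
  obtain rfl | hz := eq_or_ne z 1
  · exact smul_one a
  have : Finite K := Nat.finite_of_card_ne_zero (by omega)
  obtain ⟨w, hw, hwz⟩ : ∃ w ≠ 1, w ∉ MulAction.orbit A z := by
    by_contra! h
    exact hxy (MulAction.orbit_eq_iff.2 (h y hy) ▸ h x hx)
  have hone : 1 ∉ MulAction.orbit A z := by
    rintro ⟨b, hb⟩
    exact hz ((smul_eq_iff_eq_inv_smul b).1 hb |>.trans (smul_one b⁻¹))
  refine smul_eq_self_of_ncard_orbit_le_two hA ?_ a
  calc (MulAction.orbit A z).ncard ≤ ({w, 1}ᶜ : Set K).ncard :=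
        Set.ncard_le_ncard (by rintro _ hv (rfl | rfl) <;> contradiction)
    _ = 2 := by rw [Set.ncard_compl, Set.ncard_pair hw, hK]

end OddAction

section Sylow

variable {G : Type*} [Group G]

theorem isConj_of_mem_orbit_range_normalizerMonoidHom {H : Subgroup G} {x y : H}
    (h : x ∈ MulAction.orbit H.normalizerMonoidHom.range y) : IsConj (x : G) y := by
  obtain ⟨⟨_, n, rfl⟩, rfl⟩ := h
  exact (isConj_iff.2 ⟨n, rfl⟩ : IsConj (y : G) (n * y * n⁻¹)).symm

theorem normalizer_le_centralizer_of_range_smul_eq_self {H : Subgroup G}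
    (h : ∀ (φ : H.normalizerMonoidHom.range) (z : H), φ • z = z) :
    Subgroup.normalizer (H : Set G) ≤ Subgroup.centralizer (H : Set G) := by
  rw [← Subgroup.subgroupOf_eq_top, ← Subgroup.normalizerMonoidHom_ker, MonoidHom.ker_eq_top_iff]
  ext n z
  exact congrArg Subtype.val (h ⟨_, n, rfl⟩ z)

variable {p : ℕ} [Fact p.Prime] (P : Sylow p G)

theorem sylow_not_dvd_card_range_normalizerMonoidHom [P.FiniteIndex] [IsMulCommutative P] :
    ¬ p ∣ Nat.card (P : Subgroup G).normalizerMonoidHom.range := by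
  rw [← Subgroup.index_ker, Subgroup.normalizerMonoidHom_ker]
  exact fun h => P.not_dvd_index <| h.trans <|
    (Subgroup.relIndex_dvd_of_le_left _ P.le_centralizer).trans <|
      Subgroup.relIndex_dvd_index_of_le P.le_normalizer

theorem exists_normal_complement_of_normalizer_le_centralizer [P.FiniteIndex]
    (hP : Subgroup.normalizer (P : Set G) ≤ Subgroup.centralizer (P : Set G)) :
    ∃ N : Subgroup G, N.Normal ∧ N.index = Nat.card P ∧ ¬ p ∣ Nat.card N :=
  have := P.finite_of_finiteIndex
  ⟨(MonoidHom.transferSylow P hP).ker, inferInstance,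
    (MonoidHom.ker_transferSylow_isComplement' P hP).symm.index_eq_card,
    MonoidHom.not_dvd_card_ker_transferSylow P hP⟩

end Sylow

theorem normal_two_complement_of_klein_four_sylow_general
    {G : Type*} [Group G] [Finite G] (P : Sylow 2 G) (hP : Nat.card (P : Subgroup G) = 4)
    (x y : G) (hx : x ∈ (P : Subgroup G)) (hy : y ∈ (P : Subgroup G))
    (hx1 : x ≠ 1) (hy1 : y ≠ 1) (hconj : ¬ IsConj x y) :
    ∃ N : Subgroup G, N.Normal ∧ N.index = 4 ∧ Odd (Nat.card N) := by
  have : IsMulCommutative P := IsPGroup.isMulCommutative_of_card_eq_prime_sq (p := 2) hP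
  have hodd : Odd (Nat.card (P : Subgroup G).normalizerMonoidHom.range) := by
    simpa only [← Nat.not_even_iff_odd, even_iff_two_dvd] using
      sylow_not_dvd_card_range_normalizerMonoidHom P
  have htriv := smul_eq_self_of_card_eq_four_of_notMem_orbit hodd hP
    (x := ⟨x, hx⟩) (y := ⟨y, hy⟩) (by simpa using hx1) (by simpa using hy1)
    (fun h => hconj (isConj_of_mem_orbit_range_normalizerMonoidHom h))
  have hNC := normalizer_le_centralizer_of_range_smul_eq_self htriv
  simpa only [hP, ← even_iff_two_dvd, Nat.not_even_iff_odd] using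
    exists_normal_complement_of_normalizer_le_centralizer P hNC

/-- Let `G` be a finite group whose Sylow `2`-subgroups are Klein four groups (order `4`
and exponent `2`).  If some Sylow `2`-subgroup `P` contains two nontrivial elements which
are not conjugate in `G`, then `G` has a normal `2`-complement: a normal subgroup of
index `4` of odd order. -/
theorem normal_two_complement_of_klein_four_sylow
    {G : Type*} [Group G] [Finite G]
    (hKlein : ∀ Q : Sylow 2 G, Nat.card (Q : Subgroup G) = 4 ∧
      ∀ x : (Q : Subgroup G), x ^ 2 = 1)
    (P : Sylow 2 G) (x y : G) (hx : x ∈ (P : Subgroup G)) (hy : y ∈ (P : Subgroup G))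
    (hx1 : x ≠ 1) (hy1 : y ≠ 1) (hconj : ¬ IsConj x y) :
    ∃ N : Subgroup G, N.Normal ∧ N.index = 4 ∧ Odd (Nat.card N) :=
  normal_two_complement_of_klein_four_sylow_general P (hKlein P).1 x y hx hy hx1 hy1 hconj
end

section
/- Let q = p^f be a power of an odd prime p. Then the Sylow 2-subgroups of PSL(2,q) have order 4 if and only if q ≡ 3 (mod 8) or q ≡ 5 (mod 8) (i.e. q ≡ ±3 (mod 8)). -/
/-- `PSL(2,q)` for `q = p^f`: the quotient of `SL(2, F_q)` by its center. -/
abbrev PSL2 (p f : ℕ) [Fact p.Prime] :=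
  Matrix.SpecialLinearGroup (Fin 2) (GaloisField p f) ⧸
    Subgroup.center (Matrix.SpecialLinearGroup (Fin 2) (GaloisField p f))

/-!
For `q` odd, `|PSL(2, q)| = q (q ^ 2 - 1) / 2`, so `2 ^ k` divides `|PSL(2, q)|` exactly when
`2 ^ (k + 1)` divides `q ^ 2 - 1`. Writing `q = 2m + 1` gives `q ^ 2 - 1 = 4m(m + 1)`, which is
always divisible by `8`, and is divisible by `16` exactly when `4` divides one of the coprime
factors `m` and `m + 1`, that is, when `q ≡ ±1 (mod 8)`.
-/

theorem sylow_card_eq_pow_iff {G : Type*} [Group G] [Finite G] {p : ℕ} [Fact p.Prime]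
    (P : Sylow p G) (k : ℕ) :
    Nat.card P = p ^ k ↔ p ^ k ∣ Nat.card G ∧ ¬p ^ (k + 1) ∣ Nat.card G := by
  have hp : p.Prime := Fact.out
  rw [P.card_eq_multiplicity, (Nat.pow_right_injective hp.two_le).eq_iff,
    hp.pow_dvd_iff_le_factorization Nat.card_pos.ne',
    hp.pow_dvd_iff_le_factorization Nat.card_pos.ne']
  lia

theorem sixteen_dvd_sq_sub_one_iff {q : ℕ} (hq : Odd q) :
    16 ∣ q ^ 2 - 1 ↔ q % 8 = 1 ∨ q % 8 = 7 := by
  obtain ⟨m, rfl⟩ := hq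
  have hsq : (2 * m + 1) ^ 2 - 1 = 4 * (m * (m + 1)) := Nat.sub_eq_of_eq_add (by ring)
  have hcoprime : m.Coprime (m + 1) := by simp
  have hfour : IsPrimePow 4 := Nat.prime_two.isPrimePow.pow two_ne_zero
  calc 16 ∣ (2 * m + 1) ^ 2 - 1
    _ ↔ 4 * 4 ∣ 4 * (m * (m + 1)) := by rw [hsq]
    _ ↔ 4 ∣ m * (m + 1) := Nat.mul_dvd_mul_iff_left four_pos
    _ ↔ 4 ∣ m ∨ 4 ∣ m + 1 := hcoprime.isPrimePow_dvd_mul hfour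
    _ ↔ (2 * m + 1) % 8 = 1 ∨ (2 * m + 1) % 8 = 7 := by lia

section

open Matrix

open scoped MatrixGroups

section CommRing

variable {n R : Type*} [Fintype n] [DecidableEq n] [Nonempty n] [CommRing R]

variable (n R) in
theorem card_specialLinearGroup_mul_card_units :
    Nat.card (SpecialLinearGroup n R) * Nat.card Rˣ = Nat.card (GL n R) := by
  let det : GL n R →* Rˣ := GeneralLinearGroup.det
  have hker : (SpecialLinearGroup.toGL : SpecialLinearGroup n R →* GL n R).range = det.ker :=
    SetLike.coe_injective SpecialLinearGroup.range_toGL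
  have hcard : Nat.card (SpecialLinearGroup n R) = Nat.card det.ker := by
    rw [← hker]
    exact Nat.card_congr (MonoidHom.ofInjective SpecialLinearGroup.toGL_injective).toEquiv
  have hindex : det.ker.index = Nat.card Rˣ := by
    rw [Subgroup.index_ker, MonoidHom.range_eq_top.mpr GeneralLinearGroup.det_surjective,
      Subgroup.card_top]
  rw [hcard, ← hindex, Subgroup.card_mul_index]

theorem card_center_specialLinearGroup [IsDomain R] {ζ : R}
    (hζ : IsPrimitiveRoot ζ (Fintype.card n)) :
    Nat.card (Subgroup.center (SpecialLinearGroup n R)) = Fintype.card n := by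
  let i : n := Classical.arbitrary n
  rw [Nat.card_congr (SpecialLinearGroup.center_equiv_rootsOfUnity' i).toEquiv,
    hζ.card_rootsOfUnity]

theorem card_projectiveSpecialLinearGroup_mul_card [IsDomain R] {ζ : R}
    (hζ : IsPrimitiveRoot ζ (Fintype.card n)) :
    Nat.card (ProjectiveSpecialLinearGroup n R) * Fintype.card n =
      Nat.card (SpecialLinearGroup n R) := by
  rw [← card_center_specialLinearGroup hζ, ← Subgroup.card_eq_card_quotient_mul_card_subgroup]

end CommRing

variable {K : Type*} [Field K] [Finite K]

variable (K) in
theorem card_SL_two : Nat.card SL(2, K) = Nat.card K * (Nat.card K ^ 2 - 1) := by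
  have := Fintype.ofFinite K
  have hSL := card_specialLinearGroup_mul_card_units (Fin 2) K
  have hq : 0 < Nat.card K - 1 := Nat.sub_pos_of_lt Finite.one_lt_card
  have hsq : Nat.card K ^ 2 - Nat.card K = Nat.card K * (Nat.card K - 1) := by
    rw [sq, Nat.mul_sub_one]
  rw [Nat.card_units, card_GL_field, ← Nat.card_eq_fintype_card, Fin.prod_univ_two, Fin.val_zero,
    Fin.val_one, pow_zero, pow_one, hsq] at hSL
  exact Nat.eq_of_mul_eq_mul_right hq (by rw [hSL]; ring)

theorem card_PSL_two_mul_two (hK : ringChar K ≠ 2) :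
    Nat.card PSL(2, K) * 2 = Nat.card K * (Nat.card K ^ 2 - 1) := by
  have hneg : IsPrimitiveRoot (-1 : K) (Fintype.card (Fin 2)) := by
    simpa using IsPrimitiveRoot.neg_one (ringChar K) hK
  simpa [card_SL_two] using card_projectiveSpecialLinearGroup_mul_card hneg

theorem odd_natCard_of_ringChar_ne_two (hK : ringChar K ≠ 2) : Odd (Nat.card K) := by
  have := Fintype.ofFinite K
  rw [Nat.card_eq_fintype_card, Nat.odd_iff]
  exact FiniteField.odd_card_of_char_ne_two hK

theorem two_pow_dvd_card_PSL_two_iff (hK : ringChar K ≠ 2) (k : ℕ) :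
    2 ^ k ∣ Nat.card PSL(2, K) ↔ 2 ^ (k + 1) ∣ Nat.card K ^ 2 - 1 := by
  have hcoprime : (2 ^ (k + 1)).Coprime (Nat.card K) :=
    (Nat.coprime_two_left.mpr (odd_natCard_of_ringChar_ne_two hK)).pow_left _
  rw [← Nat.mul_dvd_mul_iff_right two_pos, ← pow_succ, card_PSL_two_mul_two hK,
    hcoprime.dvd_mul_left]

theorem sylow_two_PSL2_card_four_iff_general (hK : ringChar K ≠ 2) (P : Sylow 2 PSL(2, K)) :
    Nat.card P = 4 ↔ Nat.card K % 8 = 3 ∨ Nat.card K % 8 = 5 := by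
  have hodd : Odd (Nat.card K) := odd_natCard_of_ringChar_ne_two hK
  have hmod : Nat.card K % 2 = 1 := Nat.odd_iff.mp hodd
  calc Nat.card P = 4
    _ ↔ 2 ^ 2 ∣ Nat.card PSL(2, K) ∧ ¬2 ^ 3 ∣ Nat.card PSL(2, K) := sylow_card_eq_pow_iff P 2
    _ ↔ 8 ∣ Nat.card K ^ 2 - 1 ∧ ¬16 ∣ Nat.card K ^ 2 - 1 := by
      rw [two_pow_dvd_card_PSL_two_iff hK, two_pow_dvd_card_PSL_two_iff hK]; rfl
    _ ↔ ¬(Nat.card K % 8 = 1 ∨ Nat.card K % 8 = 7) := by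
      rw [sixteen_dvd_sq_sub_one_iff hodd, and_iff_right (Nat.eight_dvd_sq_sub_one_of_odd hodd)]
    _ ↔ Nat.card K % 8 = 3 ∨ Nat.card K % 8 = 5 := by lia

end

/-- Let `q = p^f` be a power of an odd prime `p`.  The Sylow `2`-subgroups of `PSL(2,q)`
have order `4` if and only if `q ≡ 3 (mod 8)` or `q ≡ 5 (mod 8)`. -/
theorem sylow_two_PSL2_card_four_iff
    (p f : ℕ) [Fact p.Prime] (hp : Odd p) (hf : 0 < f) (q : ℕ) (hq : q = p ^ f)
    (P : Sylow 2 (PSL2 p f)) :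
    Nat.card (P : Subgroup (PSL2 p f)) = 4 ↔ (q % 8 = 3 ∨ q % 8 = 5) := by
  have hchar : ringChar (GaloisField p f) ≠ 2 :=
    (ringChar.eq _ p).trans_ne (hp.ne_two_of_dvd_nat dvd_rfl)
  simpa [hq, GaloisField.card p f hf.ne'] using sylow_two_PSL2_card_four_iff_general hchar P
end
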